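/- Let n ≥ 1 be an integer, let α ∈ (0,1) and s ∈ (0,1), and let Ω ⊂ ℝ^{n+1} be an open convex set. Then there exists a constant C > 0, depending only on n, α, and s, such that for every μH[n]-measurable subset E ⊂ ∂Ω with |E| < ∞ one has |E|^{(n−s)/n} ≤ C · ( Per_{∂Ω,s}(E) + ∫_E H_α(x)^{s/α} dx ), where both sides are taken in [0, +∞]. -/

import Mathlib

open MeasureTheory Set Filter Metric
open scoped ENNReal NNReal

/-- The truncated integral defining the fractional `α`-mean curvature of `Ω` at `x`. -/
noncomputable def fracMCIntegral (n : ℕ) (α : ℝ) (Ω : Set (EuclideanSpace ℝ (Fin (n+1))))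
    (x : EuclideanSpace ℝ (Fin (n+1))) (ε : ℝ) : ℝ :=
  (α/2) * ∫ y in {y : EuclideanSpace ℝ (Fin (n+1)) | ε < dist y x},
      ((Ωᶜ.indicator (fun _ => (1:ℝ)) y) - (Ω.indicator (fun _ => (1:ℝ)) y))
        * (dist y x) ^ (-((n:ℝ)+1+α)) ∂volume

/-- `h` is the fractional `α`-mean curvature of `Ω` at `x` (principal value limit). -/
def IsFracMeanCurv (n : ℕ) (α : ℝ) (Ω : Set (EuclideanSpace ℝ (Fin (n+1))))
    (x : EuclideanSpace ℝ (Fin (n+1))) (h : ℝ) : Prop :=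
  Filter.Tendsto (fracMCIntegral n α Ω x) (nhdsWithin 0 (Set.Ioi 0)) (nhds h)

/-- The fractional `s`-perimeter of `F` relative to `M ⊂ ℝ^{n+1}`. -/
noncomputable def fracPerimeterIn (n : ℕ) (s : ℝ)
    (M F : Set (EuclideanSpace ℝ (Fin (n+1)))) : ℝ≥0∞ :=
  ∫⁻ x in F, ∫⁻ y in M \ F, ENNReal.ofReal (dist x y ^ (-((n:ℝ) + s)))
    ∂μH[(n:ℝ)] ∂μH[(n:ℝ)]

/-!
Choose the scale `R` with `|E| = c Rⁿ` for a small dimensional constant `c`, and let `x ∈ E`.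

If `Ω` fills at least a quarter of the ball `B` of radius `R` around `x`, then, as the reflection
through `x` maps `Ω` into its complement, so does the complement of `Ω`. By the relative
isoperimetric inequality the part of `∂Ω` in `B` has measure at least `2|E|`, hence at least `|E|`
of it lies outside `E`, and the perimeter integrand at `x` is at least a multiple of `R⁻ˢ`. The
relative isoperimetric inequality follows by averaging over translations `v`: the points `y` of
`Ω ∩ B` with `y + v ∈ B \ Ω` are sent along the direction `v` to points of `∂Ω ∩ B`, so the
projection of `∂Ω ∩ B` along `v` controls their volume.

If `Ω` fills less than a quarter of `B`, then pairing each point with its reflection through `x`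
cancels `Ω` against its mirror image in the curvature integral. What remains is nonnegative and, on
`B`, covers at least half of the volume, so `H_α(x)` is at least a multiple of `R^(-α)`.

Integrating over `E`, the right-hand side is at least a multiple of `R⁻ˢ |E|`, that is, of
`|E| ^ ((n - s) / n)`.
-/

/-! ### The relative isoperimetric inequality in a ball -/

theorem lintegral_measure_inter_preimage_add_right {G : Type*} [AddGroup G] [MeasurableSpace G]
    [MeasurableAdd₂ G] (μ : Measure G) [SFinite μ] [μ.IsAddLeftInvariant] (S : Set G) {T : Set G}
    (hT : MeasurableSet T) :
    ∫⁻ v, μ (S ∩ (· + v) ⁻¹' T) ∂μ = μ S * μ T := by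
  have hmeas : MeasurableSet {p : G × G | p.1 + p.2 ∈ T} := measurable_add hT
  calc ∫⁻ v, μ (S ∩ (· + v) ⁻¹' T) ∂μ
      = ∫⁻ v, μ.restrict S ((·, v) ⁻¹' {p : G × G | p.1 + p.2 ∈ T}) ∂μ := by
        refine lintegral_congr fun v => ?_
        rw [Measure.restrict_apply (measurable_prodMk_right hmeas), inter_comm]
        rfl
    _ = ∫⁻ w in S, μ ((w + ·) ⁻¹' T) ∂μ := by
        rw [← Measure.prod_apply_symm hmeas, Measure.prod_apply hmeas]
        rfl
    _ = μ S * μ T := by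
        simp only [measure_preimage_add, setLIntegral_const, mul_comm]

theorem inter_frontier_nonempty_of_isPreconnected {X : Type*} [TopologicalSpace X] {S U : Set X}
    (hS : IsPreconnected S) (hU : (S ∩ U).Nonempty) (hUc : (S \ U).Nonempty) :
    (S ∩ frontier U).Nonempty := by
  by_contra hempty
  have hcover : S ⊆ interior U ∪ (closure U)ᶜ := fun z hz => by
    by_contra hz'
    rw [mem_union, not_or, mem_compl_iff, not_not] at hz'
    exact hempty ⟨z, hz, hz'.2, hz'.1⟩
  obtain ⟨a, haS, haU⟩ := hU
  obtain ⟨b, hbS, hbU⟩ := hUc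
  have ha : a ∈ interior U :=
    (hcover haS).resolve_right fun ha => ha (subset_closure haU)
  have hb : b ∈ (closure U)ᶜ :=
    (hcover hbS).resolve_left fun hb => hbU (interior_subset hb)
  obtain ⟨z, -, hzU, hzUc⟩ :=
    hS _ _ isOpen_interior isClosed_closure.isOpen_compl hcover ⟨a, haS, ha⟩ ⟨b, hbS, hb⟩
  exact hzUc (interior_subset_closure hzU)

theorem ball_inter_preimage_add_right_ball_eq_empty {V : Type*} [SeminormedAddCommGroup V]
    {x v : V} {r : ℝ} (hv : v ∉ ball (0 : V) (2 * r)) :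
    ball x r ∩ (· + v) ⁻¹' ball x r = ∅ := by
  refine eq_empty_of_forall_notMem fun y hy => hv ?_
  have hy1 : dist x y < r := mem_ball'.1 hy.1
  have hy2 : dist (y + v) x < r := mem_ball.1 hy.2
  have htri := dist_triangle (y + v) x y
  rw [dist_self_add_left] at htri
  rw [mem_ball_zero_iff]
  linarith

section InnerProductSpace

variable {V : Type*} [NormedAddCommGroup V] [InnerProductSpace ℝ V] {n : ℕ}

theorem dist_repr_apply_le {ι : Type*} [Fintype ι] (b : OrthonormalBasis ι ℝ V) (y z : V) (i : ι) :
    dist (b.repr y i) (b.repr z i) ≤ dist y z := by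
  rw [← b.repr.dist_map y z, dist_eq_norm, dist_eq_norm]
  exact PiLp.norm_apply_le (b.repr y - b.repr z) i

theorem exists_orthonormalBasis_norm_smul_apply_zero_eq [FiniteDimensional ℝ V]
    (hV : Module.finrank ℝ V = n + 1) {v : V} (hv : v ≠ 0) :
    ∃ b : OrthonormalBasis (Fin (n + 1)) ℝ V, ‖v‖ • b 0 = v := by
  have horth : Orthonormal ℝ (({0} : Set (Fin (n + 1))).domRestrict fun _ => ‖v‖⁻¹ • v) :=
    ⟨fun _ => norm_smul_inv_norm (𝕜 := ℝ) hv, fun i j hij => (hij (Subsingleton.elim i j)).elim⟩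
  obtain ⟨b, hb⟩ := horth.exists_orthonormalBasis_extension_of_card_eq (by simpa using hV)
  exact ⟨b, by rw [hb 0 rfl, smul_inv_smul₀ (norm_ne_zero_iff.2 hv)]⟩

/-- The orthogonal projection along `b 0`, written in the coordinates `1, …, n` of `b`. The target
carries the sup norm, for which the `n`-dimensional Hausdorff measure is the Lebesgue measure. -/
noncomputable def tailCoords (b : OrthonormalBasis (Fin (n + 1)) ℝ V) (y : V) : Fin n → ℝ :=
  fun j => b.repr y j.succ

theorem tailCoords_add_smul (b : OrthonormalBasis (Fin (n + 1)) ℝ V) (y : V) (t : ℝ) :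
    tailCoords b (y + t • b 0) = tailCoords b y := by
  ext j
  simp [tailCoords]

theorem lipschitzWith_tailCoords (b : OrthonormalBasis (Fin (n + 1)) ℝ V) :
    LipschitzWith 1 (tailCoords b) :=
  LipschitzWith.of_dist_le_mul fun y z => (dist_pi_le_iff (by positivity)).2 fun j => by
    simpa [tailCoords] using dist_repr_apply_le b y z j.succ

variable [MeasurableSpace V] [BorelSpace V]

theorem volume_tailCoords_image_le (b : OrthonormalBasis (Fin (n + 1)) ℝ V) (F : Set V) :
    volume (tailCoords b '' F) ≤ μH[(n : ℝ)] F := by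
  have hvol : (volume : Measure (Fin n → ℝ)) = μH[(n : ℝ)] := by
    simpa using (hausdorffMeasure_pi_real (ι := Fin n)).symm
  simpa [hvol] using (lipschitzWith_tailCoords b).hausdorffMeasure_image_le n.cast_nonneg F

variable [FiniteDimensional ℝ V]

theorem volume_le_mul_volume_tailCoords_image (b : OrthonormalBasis (Fin (n + 1)) ℝ V) {S : Set V}
    {x : V} {r : ℝ} (hS : S ⊆ ball x r) :
    volume S ≤ ENNReal.ofReal (2 * r) * volume (tailCoords b '' S) := by
  set Φ : V ≃ᵐ ℝ × (Fin n → ℝ) := b.measurableEquiv.trans <|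
    (MeasurableEquiv.toLp 2 _).symm.trans (MeasurableEquiv.piFinSuccAbove (fun _ => ℝ) 0)
  have hΦ : MeasurePreserving Φ :=
    (volume_preserving_piFinSuccAbove (fun _ => ℝ) 0).comp
      ((PiLp.volume_preserving_ofLp _).comp b.measurePreserving_measurableEquiv)
  have hsub : S ⊆ Φ ⁻¹' (ball (b.repr x 0) r ×ˢ (tailCoords b '' S)) := fun y hy =>
    ⟨(dist_repr_apply_le b y x 0).trans_lt (hS hy), y, hy, rfl⟩
  calc volume S ≤ volume (ball (b.repr x 0) r ×ˢ (tailCoords b '' S)) :=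
        (measure_mono hsub).trans_eq (hΦ.measure_preimage_equiv _)
    _ = ENNReal.ofReal (2 * r) * volume (tailCoords b '' S) := by
        rw [Measure.volume_eq_prod, Measure.prod_prod, Real.volume_ball]

theorem volume_le_mul_hausdorffMeasure_of_forall_exists_add_smul_mem
    (hV : Module.finrank ℝ V = n + 1) {S F : Set V} {v x : V} {r : ℝ} (hv : v ≠ 0)
    (hS : S ⊆ ball x r) (hSF : ∀ y ∈ S, ∃ t : ℝ, y + t • v ∈ F) :
    volume S ≤ ENNReal.ofReal (2 * r) * μH[(n : ℝ)] F := by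
  obtain ⟨b, hb⟩ := exists_orthonormalBasis_norm_smul_apply_zero_eq hV hv
  have himage : tailCoords b '' S ⊆ tailCoords b '' F := by
    rintro _ ⟨y, hy, rfl⟩
    obtain ⟨t, ht⟩ := hSF y hy
    refine ⟨y + t • v, ht, ?_⟩
    rw [← hb, smul_smul, tailCoords_add_smul]
  calc volume S ≤ ENNReal.ofReal (2 * r) * volume (tailCoords b '' S) :=
        volume_le_mul_volume_tailCoords_image b hS
    _ ≤ ENNReal.ofReal (2 * r) * volume (tailCoords b '' F) := by gcongr
    _ ≤ ENNReal.ofReal (2 * r) * μH[(n : ℝ)] F := by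
        gcongr
        exact volume_tailCoords_image_le b F

theorem volume_inter_preimage_add_right_diff_le (hV : Module.finrank ℝ V = n + 1) (U : Set V)
    (v x : V) (r : ℝ) :
    volume (U ∩ ball x r ∩ (· + v) ⁻¹' (ball x r \ U))
      ≤ ENNReal.ofReal (2 * r) * μH[(n : ℝ)] (frontier U ∩ ball x r) := by
  rcases eq_or_ne v 0 with rfl | hv
  · have hempty : U ∩ ball x r ∩ (· + (0 : V)) ⁻¹' (ball x r \ U) = ∅ := by
      ext y
      simp +contextual
    rw [hempty, measure_empty]
    exact zero_le
  · refine volume_le_mul_hausdorffMeasure_of_forall_exists_add_smul_mem hV hv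
      (inter_subset_left.trans inter_subset_right) ?_
    rintro y ⟨⟨hyU, hyr⟩, hyvr, hyvU⟩
    obtain ⟨z, hz, hzU⟩ := inter_frontier_nonempty_of_isPreconnected
      (convex_segment (𝕜 := ℝ) y (y + v)).isPreconnected
      ⟨y, left_mem_segment ℝ _ _, hyU⟩ ⟨y + v, right_mem_segment ℝ _ _, hyvU⟩
    have hzr : z ∈ ball x r := (convex_ball x r).segment_subset hyr hyvr hz
    rw [segment_eq_image'] at hz
    obtain ⟨t, -, rfl⟩ := hz
    exact ⟨t, by simpa using hzU, by simpa using hzr⟩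

theorem volume_inter_ball_mul_volume_ball_diff_le (hV : Module.finrank ℝ V = n + 1) {U : Set V}
    (hU : MeasurableSet U) (x : V) (r : ℝ) :
    volume (U ∩ ball x r) * volume (ball x r \ U)
      ≤ ENNReal.ofReal (2 * r) * μH[(n : ℝ)] (frontier U ∩ ball x r)
        * volume (ball (0 : V) (2 * r)) := by
  set m := ENNReal.ofReal (2 * r) * μH[(n : ℝ)] (frontier U ∩ ball x r)
  calc volume (U ∩ ball x r) * volume (ball x r \ U)
      = ∫⁻ v, volume (U ∩ ball x r ∩ (· + v) ⁻¹' (ball x r \ U)) :=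
        (lintegral_measure_inter_preimage_add_right volume _ (measurableSet_ball.diff hU)).symm
    _ ≤ ∫⁻ v, (ball (0 : V) (2 * r)).indicator (fun _ => m) v := by
        refine lintegral_mono fun v => ?_
        by_cases hv : v ∈ ball (0 : V) (2 * r)
        · simpa only [indicator_of_mem hv] using volume_inter_preimage_add_right_diff_le hV U v x r
        · have hempty : U ∩ ball x r ∩ (· + v) ⁻¹' (ball x r \ U) = ∅ :=
            subset_empty_iff.1 <| ball_inter_preimage_add_right_ball_eq_empty (x := x) hv ▸
              inter_subset_inter inter_subset_right (preimage_mono sdiff_subset)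
          rw [hempty, measure_empty]
          exact zero_le
    _ = m * volume (ball (0 : V) (2 * r)) := lintegral_indicator_const measurableSet_ball m

end InnerProductSpace

/-! ### Convex sets and point reflections -/

theorem disjoint_preimage_pointReflection {V : Type*} [AddCommGroup V] [Module ℝ V] {Ω : Set V}
    (hΩ : Convex ℝ Ω) {x : V} (hx : x ∉ Ω) : Disjoint Ω (Equiv.pointReflection x ⁻¹' Ω) :=
  disjoint_left.2 fun y hy hy' => hx <| by
    simpa only [midpoint_pointReflection_right] using hΩ.midpoint_mem hy hy'

theorem measurePreserving_pointReflection {G : Type*} [AddCommGroup G] [MeasurableSpace G]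
    [MeasurableAdd G] [MeasurableNeg G] (μ : Measure G) [μ.IsAddLeftInvariant] [μ.IsNegInvariant]
    (x : G) : MeasurePreserving (Equiv.pointReflection x) μ μ :=
  (measurePreserving_add_right μ x).comp (μ.measurePreserving_sub_left x)

theorem preimage_pointReflection_ball {V : Type*} [SeminormedAddCommGroup V] [NormedSpace ℝ V]
    (x : V) (r : ℝ) : Equiv.pointReflection x ⁻¹' ball x r = ball x r := by
  ext y
  rw [mem_preimage, mem_ball, mem_ball', dist_pointReflection_left]

/-- The integrand `χ_{Ωᶜ} - χ_Ω` of the fractional mean curvature. -/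
noncomputable def outsideSign {V : Type*} (Ω : Set V) (y : V) : ℝ :=
  Ωᶜ.indicator (fun _ => (1 : ℝ)) y - Ω.indicator (fun _ => (1 : ℝ)) y

section FiniteDimensional

variable {V : Type*} [NormedAddCommGroup V] [NormedSpace ℝ V] [FiniteDimensional ℝ V]
  [MeasurableSpace V] [BorelSpace V] (μ : Measure V) [μ.IsAddHaarMeasure] {Ω : Set V} {x : V}

theorem measure_inter_ball_le_measure_ball_diff (hΩ : Convex ℝ Ω) (hx : x ∉ Ω) (r : ℝ) :
    μ (Ω ∩ ball x r) ≤ μ (ball x r \ Ω) := by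
  have hΩmeas : NullMeasurableSet (Ω ∩ ball x r) μ :=
    (hΩ.nullMeasurableSet μ).inter measurableSet_ball.nullMeasurableSet
  rw [← (measurePreserving_pointReflection μ x).measure_preimage hΩmeas, preimage_inter,
    preimage_pointReflection_ball]
  exact measure_mono fun y hy =>
    ⟨hy.2, (disjoint_preimage_pointReflection hΩ hx).notMem_of_mem_right hy.1⟩

theorem setIntegral_outsideSign_mul_eq (hΩ : Convex ℝ Ω) (hΩm : MeasurableSet Ω) (hx : x ∉ Ω)
    {D : Set V} (hD : Equiv.pointReflection x ⁻¹' D = D) {k : V → ℝ}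
    (hk : ∀ y, k (Equiv.pointReflection x y) = k y) (hint : IntegrableOn k D μ) :
    ∫ y in D, outsideSign Ω y * k y ∂μ
      = ∫ y in D \ (Ω ∪ Equiv.pointReflection x ⁻¹' Ω), k y ∂μ := by
  set σ := Equiv.pointReflection x
  have hσ : MeasurePreserving σ μ μ := measurePreserving_pointReflection μ x
  have hσe : MeasurableEmbedding σ :=
    (MeasurableEquiv.ofInvolutive σ (Equiv.pointReflection_involutive x)
      hσ.measurable).measurableEmbedding
  have hσΩm : MeasurableSet (σ ⁻¹' Ω) := hσ.measurable hΩm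
  have hreflect : ∫ y in D ∩ σ ⁻¹' Ω, k y ∂μ = ∫ y in D ∩ Ω, k y ∂μ := by
    calc ∫ y in D ∩ σ ⁻¹' Ω, k y ∂μ = ∫ y in σ ⁻¹' (D ∩ Ω), k (σ y) ∂μ := by
          simp only [preimage_inter, hD, hk]
      _ = ∫ y in D ∩ Ω, k y ∂μ := hσ.setIntegral_preimage_emb hσe k _
  have hsplit : (fun y => outsideSign Ω y * k y) =
      (Ω ∪ σ ⁻¹' Ω)ᶜ.indicator k + (σ ⁻¹' Ω).indicator k - Ω.indicator k := by
    ext y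
    by_cases hy : y ∈ Ω
    · have hy' : y ∉ σ ⁻¹' Ω := (disjoint_preimage_pointReflection hΩ hx).notMem_of_mem_left hy
      simp [outsideSign, hy, hy']
    · by_cases hy' : y ∈ σ ⁻¹' Ω <;> simp [outsideSign, hy, hy']
  have hintU := hint.indicator (hΩm.union hσΩm).compl
  have hintσ := hint.indicator hσΩm
  calc ∫ y in D, outsideSign Ω y * k y ∂μ
      = ∫ y in D \ (Ω ∪ σ ⁻¹' Ω), k y ∂μ + ∫ y in D ∩ σ ⁻¹' Ω, k y ∂μ - ∫ y in D ∩ Ω, k y ∂μ := by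
        rw [hsplit, integral_sub' (hintU.add hintσ) (hint.indicator hΩm),
          integral_add' hintU hintσ, setIntegral_indicator (hΩm.union hσΩm).compl,
          setIntegral_indicator hσΩm, setIntegral_indicator hΩm, sdiff_eq]
    _ = ∫ y in D \ (Ω ∪ σ ⁻¹' Ω), k y ∂μ := by rw [hreflect, add_sub_cancel_right]

theorem integrableOn_dist_rpow_neg {p ε : ℝ} (hp : (Module.finrank ℝ V : ℝ) < p) (hε : 0 < ε)
    (x : V) : IntegrableOn (fun y => dist y x ^ (-p)) {y | ε < dist y x} μ := by
  have hp0 : 0 < p := (Nat.cast_nonneg _).trans_lt hp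
  have hint : Integrable (fun y => (1 + ‖y - x‖) ^ (-p)) μ :=
    (integrable_one_add_norm hp).comp_sub_right x
  refine Integrable.mono' (hint.const_mul ((1 + 1 / ε) ^ p)).integrableOn
    (Measurable.aestronglyMeasurable (by fun_prop)) ?_
  have hmeas : MeasurableSet {y | ε < dist y x} := measurableSet_lt measurable_const (by fun_prop)
  filter_upwards [ae_restrict_mem hmeas] with y (hy : ε < dist y x)
  have hd : 0 < dist y x := hε.trans hy
  have hcompare : (dist y x)⁻¹ ≤ (1 + 1 / ε) / (1 + dist y x) := by
    rw [le_div_iff₀ (by positivity), inv_mul_eq_div, add_div, div_self hd.ne', add_comm]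
    gcongr
  calc ‖dist y x ^ (-p)‖ = (dist y x)⁻¹ ^ p := by
        rw [Real.norm_of_nonneg (by positivity), Real.rpow_neg hd.le, Real.inv_rpow hd.le]
    _ ≤ ((1 + 1 / ε) / (1 + dist y x)) ^ p := by gcongr
    _ = (1 + 1 / ε) ^ p * (1 + ‖y - x‖) ^ (-p) := by
        rw [← dist_eq_norm, Real.div_rpow (by positivity) (by positivity),
          Real.rpow_neg (by positivity), div_eq_mul_inv]

theorem le_measureReal_diff_union_preimage_pointReflection_inter_ball (hΩm : MeasurableSet Ω)
    (x : V) (r ε : ℝ) :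
    μ.real (ball x r) - 2 * μ.real (Ω ∩ ball x r) - μ.real (closedBall x ε)
      ≤ μ.real (({y | ε < dist y x} \ (Ω ∪ Equiv.pointReflection x ⁻¹' Ω)) ∩ ball x r) := by
  set σ := Equiv.pointReflection x
  set A := {y | ε < dist y x} \ (Ω ∪ σ ⁻¹' Ω)
  have hreflect : μ.real (σ ⁻¹' Ω ∩ ball x r) = μ.real (Ω ∩ ball x r) := by
    rw [← (measurePreserving_pointReflection μ x).measureReal_preimage
      (hΩm.inter measurableSet_ball).nullMeasurableSet, preimage_inter,
      preimage_pointReflection_ball]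
  set N := (Ω ∪ σ ⁻¹' Ω) ∩ ball x r ∪ closedBall x ε
  have hN : μ N ≠ ∞ :=
    ((isBounded_ball.subset inter_subset_right).union isBounded_closedBall).measure_lt_top.ne
  have hNle : μ.real N ≤ 2 * μ.real (Ω ∩ ball x r) + μ.real (closedBall x ε) := by
    calc μ.real N ≤ μ.real ((Ω ∪ σ ⁻¹' Ω) ∩ ball x r) + μ.real (closedBall x ε) :=
          measureReal_union_le _ _
      _ ≤ μ.real (Ω ∩ ball x r) + μ.real (σ ⁻¹' Ω ∩ ball x r) + μ.real (closedBall x ε) := by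
          rw [union_inter_distrib_right]
          gcongr
          exact measureReal_union_le _ _
      _ = 2 * μ.real (Ω ∩ ball x r) + μ.real (closedBall x ε) := by rw [hreflect, two_mul]
  have hsub : ball x r \ N ⊆ A ∩ ball x r := fun y hy =>
    have hε : ε < dist y x := not_le.1 fun hle => hy.2 (Or.inr hle)
    ⟨⟨hε, fun hΩ => hy.2 (Or.inl ⟨hΩ, hy.1⟩)⟩, hy.1⟩
  calc μ.real (ball x r) - 2 * μ.real (Ω ∩ ball x r) - μ.real (closedBall x ε)
      ≤ μ.real (ball x r) - μ.real N := by linarith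
    _ ≤ μ.real (ball x r \ N) := le_measureReal_sdiff hN
    _ ≤ μ.real (A ∩ ball x r) := measureReal_mono hsub

theorem le_setIntegral_outsideSign_mul_dist_rpow_neg (hΩ : Convex ℝ Ω) (hΩm : MeasurableSet Ω)
    (hx : x ∉ Ω) {p r ε : ℝ} (hp : (Module.finrank ℝ V : ℝ) < p) (hr : 0 < r) (hε : 0 < ε) :
    r ^ (-p) * (μ.real (ball x r) - 2 * μ.real (Ω ∩ ball x r) - μ.real (closedBall x ε))
      ≤ ∫ y in {y | ε < dist y x}, outsideSign Ω y * dist y x ^ (-p) ∂μ := by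
  set σ := Equiv.pointReflection x
  have hdist (y : V) : dist (σ y) x = dist y x := by rw [dist_pointReflection_left, dist_comm]
  have hint := integrableOn_dist_rpow_neg μ hp hε x
  rw [setIntegral_outsideSign_mul_eq μ hΩ hΩm hx (by simp [hdist, σ]) (fun y => by rw [hdist]) hint]
  set A := {y | ε < dist y x} \ (Ω ∪ σ ⁻¹' Ω)
  have hA : MeasurableSet (A ∩ ball x r) :=
    ((measurableSet_lt measurable_const (by fun_prop)).diff (hΩm.union <|
      (measurePreserving_pointReflection μ x).measurable hΩm)).inter measurableSet_ball
  have hintA : IntegrableOn (fun y => dist y x ^ (-p)) A μ := hint.mono_set sdiff_subset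
  calc r ^ (-p) * (μ.real (ball x r) - 2 * μ.real (Ω ∩ ball x r) - μ.real (closedBall x ε))
      ≤ r ^ (-p) * μ.real (A ∩ ball x r) := by
        gcongr
        exact le_measureReal_diff_union_preimage_pointReflection_inter_ball μ hΩm x r ε
    _ ≤ ∫ y in A ∩ ball x r, dist y x ^ (-p) ∂μ := by
        refine setIntegral_ge_of_const_le_real hA (by finiteness) (fun y hy => ?_)
          (hintA.mono_set inter_subset_left)
        have hd : ε < dist y x := hy.1.1
        exact Real.rpow_le_rpow_of_nonpos (hε.trans hd) (mem_ball.1 hy.2).le (by linarith)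
    _ ≤ ∫ y in A, dist y x ^ (-p) ∂μ :=
        setIntegral_mono_set hintA (Eventually.of_forall fun y => by positivity)
          inter_subset_left.eventuallyLE

end FiniteDimensional

section InnerProductSpace

variable {V : Type*} [NormedAddCommGroup V] [InnerProductSpace ℝ V] [FiniteDimensional ℝ V]
  [MeasurableSpace V] [BorelSpace V] {n : ℕ}

theorem volume_ball_le_mul_hausdorffMeasure_frontier (hV : Module.finrank ℝ V = n + 1) {Ω : Set V}
    (hΩ : Convex ℝ Ω) (hΩm : MeasurableSet Ω) {x : V} (hx : x ∉ Ω) {r : ℝ} (hr : 0 < r)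
    (hthick : volume (ball x r) ≤ 4 * volume (Ω ∩ ball x r)) :
    volume (ball x r)
      ≤ ENNReal.ofReal (2 ^ (n + 6) * r) * μH[(n : ℝ)] (frontier Ω ∩ ball x r) := by
  set H := μH[(n : ℝ)] (frontier Ω ∩ ball x r)
  have hthin : volume (ball x r) ≤ 4 * volume (ball x r \ Ω) :=
    hthick.trans (by gcongr 4 * ?_; exact measure_inter_ball_le_measure_ball_diff volume hΩ hx r)
  have hdouble :
      volume (ball (0 : V) (2 * r)) = ENNReal.ofReal (2 ^ (n + 1)) * volume (ball x r) := by
    rw [Measure.addHaar_ball_mul_of_pos volume 0 two_pos, hV, Measure.addHaar_ball_center volume x]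
  rw [← ENNReal.mul_le_mul_iff_left (measure_ball_pos volume x hr).ne' measure_ball_lt_top.ne]
  calc volume (ball x r) * volume (ball x r)
      ≤ 4 * volume (Ω ∩ ball x r) * (4 * volume (ball x r \ Ω)) := by gcongr
    _ = 16 * (volume (Ω ∩ ball x r) * volume (ball x r \ Ω)) := by ring
    _ ≤ 16 * (ENNReal.ofReal (2 * r) * H * volume (ball (0 : V) (2 * r))) := by
        gcongr 16 * ?_
        exact volume_inter_ball_mul_volume_ball_diff_le hV hΩm x r
    _ = ENNReal.ofReal (16 * (2 * r) * 2 ^ (n + 1)) * H * volume (ball x r) := by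
        rw [hdouble, ENNReal.ofReal_mul (p := 16 * (2 * r)) (by positivity),
          ENNReal.ofReal_mul (p := 16) (by norm_num), ENNReal.ofReal_ofNat]
        ring
    _ = ENNReal.ofReal (2 ^ (n + 6) * r) * H * volume (ball x r) := by
        congr 3
        ring

end InnerProductSpace

/-! ### The dichotomy at a boundary point -/

theorem IsFracMeanCurv.mul_rpow_neg_mul_le {n : ℕ} {α h r : ℝ}
    {Ω : Set (EuclideanSpace ℝ (Fin (n + 1)))} {x : EuclideanSpace ℝ (Fin (n + 1))}
    (hh : IsFracMeanCurv n α Ω x h) (hα : 0 < α) (hΩ : Convex ℝ Ω) (hΩm : MeasurableSet Ω)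
    (hx : x ∉ Ω) (hr : 0 < r) :
    α / 2 * (r ^ (-((n : ℝ) + 1 + α)) * (volume.real (ball x r) - 2 * volume.real (Ω ∩ ball x r)))
      ≤ h := by
  have hsmall :
      Tendsto (fun ε => volume.real (closedBall x ε)) (nhdsWithin 0 (Ioi 0)) (nhds 0) := by
    have hpow : Tendsto (fun ε : ℝ => ε ^ (n + 1) *
        volume.real (ball (0 : EuclideanSpace ℝ (Fin (n + 1))) 1)) (nhdsWithin 0 (Ioi 0))
        (nhds 0) :=
      tendsto_nhdsWithin_of_tendsto_nhds <|
        Continuous.tendsto' (by fun_prop) _ _ (by simp)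
    refine hpow.congr' ?_
    filter_upwards [self_mem_nhdsWithin] with ε (hε : 0 < ε)
    rw [Measure.addHaar_real_closedBall volume x hε.le, finrank_euclideanSpace_fin]
  have hlim := ((hsmall.const_sub
    (volume.real (ball x r) - 2 * volume.real (Ω ∩ ball x r))).const_mul
    (r ^ (-((n : ℝ) + 1 + α)))).const_mul (α / 2)
  rw [sub_zero] at hlim
  refine le_of_tendsto_of_tendsto hlim hh ?_
  filter_upwards [self_mem_nhdsWithin] with ε (hε : 0 < ε)
  have hp : (Module.finrank ℝ (EuclideanSpace ℝ (Fin (n + 1))) : ℝ) < n + 1 + α := by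
    simpa using hα
  exact mul_le_mul_of_nonneg_left
    (le_setIntegral_outsideSign_mul_dist_rpow_neg volume hΩ hΩm hx hp hr hε) (by positivity)

/-- The constant `c` such that, at a boundary point of a convex set filling at least a quarter of a
ball of radius `r`, the boundary has measure at least `2 c rⁿ` in that ball. -/
noncomputable def densityConst (n : ℕ) : ℝ :=
  volume.real (ball (0 : EuclideanSpace ℝ (Fin (n + 1))) 1) / 2 ^ (n + 7)

/-- The constant `c` such that, at a boundary point of a convex set filling less than a quarter of a
ball of radius `r`, the `α`-mean curvature raised to the power `s / α` is at least `c r⁻ˢ`. -/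
noncomputable def curvatureConst (n : ℕ) (α s : ℝ) : ℝ :=
  (α / 4 * volume.real (ball (0 : EuclideanSpace ℝ (Fin (n + 1))) 1)) ^ (s / α)

theorem volume_real_unitBall_pos (n : ℕ) :
    0 < volume.real (ball (0 : EuclideanSpace ℝ (Fin (n + 1))) 1) :=
  ENNReal.toReal_pos (measure_ball_pos volume 0 one_pos).ne' measure_ball_lt_top.ne

theorem volume_real_ball_eq_pow_mul {n : ℕ} (x : EuclideanSpace ℝ (Fin (n + 1))) {r : ℝ}
    (hr : 0 ≤ r) : volume.real (ball x r) =
      r ^ (n + 1) * volume.real (ball (0 : EuclideanSpace ℝ (Fin (n + 1))) 1) := by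
  rw [← Measure.addHaar_real_closedBall_eq_addHaar_real_ball,
    Measure.addHaar_real_closedBall volume x hr, finrank_euclideanSpace_fin]

theorem densityConst_pos (n : ℕ) : 0 < densityConst n :=
  div_pos (volume_real_unitBall_pos n) (by positivity)

theorem curvatureConst_pos (n : ℕ) {α : ℝ} (s : ℝ) (hα : 0 < α) : 0 < curvatureConst n α s :=
  Real.rpow_pos_of_pos (mul_pos (by positivity) (volume_real_unitBall_pos n)) _

section EuclideanSpace

variable {n : ℕ} {Ω : Set (EuclideanSpace ℝ (Fin (n + 1)))} {x : EuclideanSpace ℝ (Fin (n + 1))}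
  {r : ℝ}

theorem two_mul_densityConst_mul_pow_le (hΩ : Convex ℝ Ω) (hΩm : MeasurableSet Ω) (hx : x ∉ Ω)
    (hr : 0 < r) (hthick : volume (ball x r) ≤ 4 * volume (Ω ∩ ball x r)) :
    2 * ENNReal.ofReal (densityConst n * r ^ n) ≤ μH[(n : ℝ)] (frontier Ω ∩ ball x r) := by
  have hball : volume (ball x r) =
      ENNReal.ofReal (2 ^ (n + 6) * r) * (2 * ENNReal.ofReal (densityConst n * r ^ n)) := by
    have hreal : volume.real (ball x r) = 2 ^ (n + 6) * r * (2 * (densityConst n * r ^ n)) := by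
      rw [volume_real_ball_eq_pow_mul x hr.le, densityConst]
      field
    rw [← ofReal_measureReal, hreal, ENNReal.ofReal_mul (by positivity),
      ENNReal.ofReal_mul zero_le_two, ENNReal.ofReal_ofNat]
  have hle := volume_ball_le_mul_hausdorffMeasure_frontier finrank_euclideanSpace_fin hΩ hΩm hx hr
    hthick
  rw [hball] at hle
  exact (ENNReal.mul_le_mul_iff_right (by simpa) ENNReal.ofReal_ne_top).1 hle

theorem IsFracMeanCurv.curvatureConst_mul_rpow_neg_le {α h s : ℝ} (hh : IsFracMeanCurv n α Ω x h)
    (hα : 0 < α) (hs : 0 ≤ s) (hΩ : Convex ℝ Ω) (hΩm : MeasurableSet Ω) (hx : x ∉ Ω) (hr : 0 < r)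
    (hthin : 4 * volume (Ω ∩ ball x r) ≤ volume (ball x r)) :
    curvatureConst n α s * r ^ (-s) ≤ h ^ (s / α) := by
  set ω := volume.real (ball (0 : EuclideanSpace ℝ (Fin (n + 1))) 1)
  have hω : 0 < ω := volume_real_unitBall_pos n
  have hball : volume.real (ball x r) = r ^ (n + 1) * ω := volume_real_ball_eq_pow_mul x hr.le
  have hthin_real : 4 * volume.real (Ω ∩ ball x r) ≤ volume.real (ball x r) := by
    simpa [Measure.real] using ENNReal.toReal_mono measure_ball_lt_top.ne hthin
  have hcurv : α / 4 * ω * r ^ (-α) ≤ h := by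
    calc α / 4 * ω * r ^ (-α)
        = α / 2 * (r ^ (-((n : ℝ) + 1 + α)) * (volume.real (ball x r) / 2)) := by
          have hpow : r ^ (-α) = r ^ (-((n : ℝ) + 1 + α)) * r ^ (n + 1) := by
            rw [← Real.rpow_natCast, ← Real.rpow_add hr]
            congr 1
            push_cast
            ring
          rw [hpow, hball]
          ring
      _ ≤ α / 2 * (r ^ (-((n : ℝ) + 1 + α))
            * (volume.real (ball x r) - 2 * volume.real (Ω ∩ ball x r))) := by
          gcongr
          linarith
      _ ≤ h := hh.mul_rpow_neg_mul_le hα hΩ hΩm hx hr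
  calc curvatureConst n α s * r ^ (-s) = (α / 4 * ω * r ^ (-α)) ^ (s / α) := by
        rw [Real.mul_rpow (by positivity) (by positivity), ← Real.rpow_mul hr.le, curvatureConst]
        congr 2
        field
    _ ≤ h ^ (s / α) := by gcongr

end EuclideanSpace

/-! ### Integrating the dichotomy -/

theorem ofReal_rpow_neg_mul_measure_inter_ball_le {X : Type*} [MetricSpace X] [MeasurableSpace X]
    [OpensMeasurableSpace X] (μ : Measure X) [NullSingletonClass μ] (A : Set X) (x : X) (R : ℝ)
    {p : ℝ} (hp : 0 ≤ p) :
    ENNReal.ofReal (R ^ (-p)) * μ (A ∩ ball x R)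
      ≤ ∫⁻ y in A, ENNReal.ofReal (dist x y ^ (-p)) ∂μ := by
  have hne : ∀ᵐ y ∂μ.restrict A, y ≠ x :=
    ae_restrict_of_ae ((countable_singleton x).ae_notMem μ)
  calc ENNReal.ofReal (R ^ (-p)) * μ (A ∩ ball x R)
      = ∫⁻ _ in ball x R, ENNReal.ofReal (R ^ (-p)) ∂μ.restrict A := by
        rw [setLIntegral_const, Measure.restrict_apply measurableSet_ball, inter_comm]
    _ ≤ ∫⁻ y in ball x R, ENNReal.ofReal (dist x y ^ (-p)) ∂μ.restrict A := by
        refine setLIntegral_mono_ae' measurableSet_ball (hne.mono fun y hyx hy => ?_)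
        gcongr ENNReal.ofReal ?_
        exact Real.rpow_le_rpow_of_nonpos (dist_pos.2 hyx.symm) (mem_ball'.1 hy).le
          (neg_nonpos.2 hp)
    _ ≤ ∫⁻ y in A, ENNReal.ofReal (dist x y ^ (-p)) ∂μ := setLIntegral_le_lintegral _ _

theorem ofReal_rpow_neg_mul_measure_le_of_two_mul_le {X : Type*} [MetricSpace X]
    [MeasurableSpace X] [OpensMeasurableSpace X] (μ : Measure X) [NullSingletonClass μ]
    {E M : Set X} {x : X} {R p : ℝ} (hp : 0 ≤ p) (hE : μ E ≠ ∞)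
    (hME : 2 * μ E ≤ μ (M ∩ ball x R)) :
    ENNReal.ofReal (R ^ (-p)) * μ E ≤ ∫⁻ y in M \ E, ENNReal.ofReal (dist x y ^ (-p)) ∂μ := by
  have hdiff : μ E ≤ μ ((M \ E) ∩ ball x R) := by
    refine (ENNReal.add_le_add_iff_right hE).1 ?_
    calc μ E + μ E = 2 * μ E := (two_mul _).symm
      _ ≤ μ (M ∩ ball x R) := hME
      _ ≤ μ ((M \ E) ∩ ball x R ∪ E) := by
          refine measure_mono fun y hy => ?_
          by_cases hyE : y ∈ E
          · exact Or.inr hyE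
          · exact Or.inl ⟨⟨hy.1, hyE⟩, hy.2⟩
      _ ≤ μ ((M \ E) ∩ ball x R) + μ E := measure_union_le _ _
  calc ENNReal.ofReal (R ^ (-p)) * μ E
      ≤ ENNReal.ofReal (R ^ (-p)) * μ ((M \ E) ∩ ball x R) := by gcongr
    _ ≤ ∫⁻ y in M \ E, ENNReal.ofReal (dist x y ^ (-p)) ∂μ :=
        ofReal_rpow_neg_mul_measure_inter_ball_le μ _ x R hp

theorem measurable_measure_inter_ball {X : Type*} [PseudoMetricSpace X] [SecondCountableTopology X]
    [MeasurableSpace X] [OpensMeasurableSpace X] (μ : Measure X) [SFinite μ] {A : Set X}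
    (hA : MeasurableSet A) (r : ℝ) : Measurable fun x => μ (A ∩ ball x r) := by
  have hmeas : MeasurableSet {q : X × X | q.2 ∈ A ∧ dist q.2 q.1 < r} :=
    (measurable_snd hA).inter
      (measurableSet_lt (measurable_snd.dist measurable_fst) measurable_const)
  exact measurable_measure_prodMk_left hmeas

theorem const_mul_measure_univ_le_lintegral_add_lintegral {X : Type*} [MeasurableSpace X]
    {μ : Measure X} {A : Set X} (hA : MeasurableSet A) {f g : X → ℝ≥0∞} {c : ℝ≥0∞}
    (hf : ∀ᵐ x ∂μ, x ∈ A → c ≤ f x) (hg : ∀ᵐ x ∂μ, x ∉ A → c ≤ g x) :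
    c * μ univ ≤ ∫⁻ x, f x ∂μ + ∫⁻ x, g x ∂μ := by
  calc c * μ univ = ∫⁻ _ in A, c ∂μ + ∫⁻ _ in Aᶜ, c ∂μ := by
        rw [lintegral_add_compl _ hA, lintegral_const]
    _ ≤ ∫⁻ x in A, f x ∂μ + ∫⁻ x in Aᶜ, g x ∂μ :=
        add_le_add (setLIntegral_mono_ae' hA hf) (setLIntegral_mono_ae' hA.compl hg)
    _ ≤ ∫⁻ x, f x ∂μ + ∫⁻ x, g x ∂μ :=
        add_le_add (setLIntegral_le_lintegral _ _) (setLIntegral_le_lintegral _ _)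

section EuclideanSpace

variable {n : ℕ} {α s R : ℝ} {Ω E : Set (EuclideanSpace ℝ (Fin (n + 1)))}

theorem ofReal_densityConst_mul_rpow_neg_le {x : EuclideanSpace ℝ (Fin (n + 1))} (hn : n ≠ 0)
    (hs : 0 ≤ s) (hΩ : Convex ℝ Ω) (hΩm : MeasurableSet Ω) (hx : x ∉ Ω) (hR : 0 < R)
    (hER : μH[(n : ℝ)] E = ENNReal.ofReal (densityConst n * R ^ n))
    (hthick : volume (ball x R) ≤ 4 * volume (Ω ∩ ball x R)) :
    ENNReal.ofReal (densityConst n * R ^ (-s))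
      ≤ ∫⁻ y in frontier Ω \ E, ENNReal.ofReal (dist x y ^ (-((n : ℝ) + s))) ∂μH[(n : ℝ)] := by
  have : NullSingletonClass (μH[(n : ℝ)] : Measure (EuclideanSpace ℝ (Fin (n + 1)))) :=
    Measure.nullSingletonClass_hausdorff _ (by positivity)
  have hpow : R ^ (-s) = R ^ (-((n : ℝ) + s)) * R ^ n := by
    rw [← Real.rpow_natCast, ← Real.rpow_add hR]
    congr 1
    ring
  calc ENNReal.ofReal (densityConst n * R ^ (-s))
      = ENNReal.ofReal (R ^ (-((n : ℝ) + s))) * μH[(n : ℝ)] E := by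
        rw [hER, ← ENNReal.ofReal_mul (by positivity), hpow]
        congr 1
        ring
    _ ≤ ∫⁻ y in frontier Ω \ E, ENNReal.ofReal (dist x y ^ (-((n : ℝ) + s))) ∂μH[(n : ℝ)] :=
        ofReal_rpow_neg_mul_measure_le_of_two_mul_le _ (by positivity) (hER ▸ ENNReal.ofReal_ne_top)
          (hER ▸ two_mul_densityConst_mul_pow_le hΩ hΩm hx hR hthick)

theorem ofReal_min_mul_rpow_neg_mul_hausdorffMeasure_le (hn : n ≠ 0) (hα : 0 < α) (hs : 0 ≤ s)
    (hΩo : IsOpen Ω) (hΩ : Convex ℝ Ω) {Hα : EuclideanSpace ℝ (Fin (n + 1)) → ℝ}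
    (hHα : ∀ᵐ x ∂(μH[(n : ℝ)].restrict (frontier Ω)), IsFracMeanCurv n α Ω x (Hα x))
    (hE : E ⊆ frontier Ω) (hR : 0 < R)
    (hER : μH[(n : ℝ)] E = ENNReal.ofReal (densityConst n * R ^ n)) :
    ENNReal.ofReal (min (densityConst n) (curvatureConst n α s) * R ^ (-s)) * μH[(n : ℝ)] E
      ≤ fracPerimeterIn n s (frontier Ω) E
        + ∫⁻ x in E, ENNReal.ofReal (Hα x ^ (s / α)) ∂μH[(n : ℝ)] := by
  have hnotMem : ∀ᵐ x ∂μH[(n : ℝ)].restrict E, x ∉ Ω := by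
    filter_upwards [ae_restrict_of_ae_restrict_of_subset hE
      (ae_restrict_mem isClosed_frontier.measurableSet)] with x hx
    exact (hΩo.frontier_eq ▸ hx).2
  have hthick : MeasurableSet
      {x : EuclideanSpace ℝ (Fin (n + 1)) | volume (ball x R) ≤ 4 * volume (Ω ∩ ball x R)} := by
    simp only [Measure.addHaar_ball_center volume _ R]
    exact measurableSet_le measurable_const
      ((measurable_measure_inter_ball volume hΩo.measurableSet R).const_mul 4)
  rw [fracPerimeterIn, ← Measure.restrict_apply_univ E]
  refine const_mul_measure_univ_le_lintegral_add_lintegral hthick ?_ ?_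
  · filter_upwards [hnotMem] with x hx hxthick
    refine le_trans ?_ (ofReal_densityConst_mul_rpow_neg_le hn hs hΩ hΩo.measurableSet hx hR hER
      hxthick)
    gcongr
    exact min_le_left _ _
  · filter_upwards [hnotMem, ae_restrict_of_ae_restrict_of_subset hE hHα] with x hx hcurv hxthin
    gcongr ENNReal.ofReal ?_
    refine le_trans ?_ (hcurv.curvatureConst_mul_rpow_neg_le hα hs hΩ hΩo.measurableSet hx hR
      (not_le.1 hxthin).le)
    gcongr
    exact min_le_right _ _

end EuclideanSpace

theorem exists_pos_ofReal_mul_pow_eq {n : ℕ} (hn : n ≠ 0) {c : ℝ} (hc : 0 < c) {a : ℝ≥0∞}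
    (ha : a ≠ 0) (ha' : a ≠ ∞) : ∃ R : ℝ, 0 < R ∧ a = ENNReal.ofReal (c * R ^ n) := by
  have hpos : 0 < a.toReal / c := div_pos (ENNReal.toReal_pos ha ha') hc
  refine ⟨(a.toReal / c) ^ (n : ℝ)⁻¹, by positivity, ?_⟩
  rw [Real.rpow_inv_natCast_pow hpos.le hn, mul_div_cancel₀ _ hc.ne', ENNReal.ofReal_toReal ha']

/-- The constant of the isoperimetric inequality, chosen so that
`|E| ^ ((n - s) / n) = C * (min c₁ c₂ * R⁻ˢ) * |E|` when `|E| = c₁ Rⁿ`, where `c₁` and `c₂` are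
`densityConst n` and `curvatureConst n α s`. -/
noncomputable def isoperimetricConst (n : ℕ) (α s : ℝ) : ℝ :=
  densityConst n ^ (((n : ℝ) - s) / n)
    / (min (densityConst n) (curvatureConst n α s) * densityConst n)

theorem isoperimetricConst_pos (n : ℕ) {α : ℝ} (s : ℝ) (hα : 0 < α) :
    0 < isoperimetricConst n α s := by
  have hmin := lt_min (densityConst_pos n) (curvatureConst_pos n s hα)
  have := densityConst_pos n
  unfold isoperimetricConst
  positivity

theorem ofReal_densityConst_mul_pow_rpow_eq {n : ℕ} {α R : ℝ} (s : ℝ) (hn : n ≠ 0) (hα : 0 < α)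
    (hR : 0 < R) :
    ENNReal.ofReal (densityConst n * R ^ n) ^ (((n : ℝ) - s) / n)
      = ENNReal.ofReal (isoperimetricConst n α s)
        * (ENNReal.ofReal (min (densityConst n) (curvatureConst n α s) * R ^ (-s))
          * ENNReal.ofReal (densityConst n * R ^ n)) := by
  have hc := densityConst_pos n
  have hmin := lt_min hc (curvatureConst_pos n s hα)
  have hpow : (R ^ n) ^ (((n : ℝ) - s) / n) = R ^ (-s) * R ^ n := by
    rw [← Real.rpow_natCast_mul hR.le, ← Real.rpow_natCast R n, ← Real.rpow_add hR]
    congr 1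
    field
  rw [ENNReal.ofReal_rpow_of_pos (by positivity), Real.mul_rpow hc.le (by positivity), hpow,
    ← ENNReal.ofReal_mul (by positivity), ← ENNReal.ofReal_mul (isoperimetricConst_pos n s hα).le,
    isoperimetricConst]
  congr 1
  field

theorem fractional_michael_simon_isoperimetric_convex_general (n : ℕ) {α s : ℝ} (hα : 0 < α)
    (hs : 0 ≤ s) (hsn : s < n) :
    ∃ C : ℝ, 0 < C ∧
      ∀ Ω : Set (EuclideanSpace ℝ (Fin (n + 1))), IsOpen Ω → Convex ℝ Ω →
      ∀ Hα : EuclideanSpace ℝ (Fin (n + 1)) → ℝ,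
        (∀ᵐ x ∂(μH[(n : ℝ)].restrict (frontier Ω)), IsFracMeanCurv n α Ω x (Hα x)) →
      ∀ E : Set (EuclideanSpace ℝ (Fin (n + 1))), E ⊆ frontier Ω → μH[(n : ℝ)] E < ⊤ →
        μH[(n : ℝ)] E ^ (((n : ℝ) - s) / n)
          ≤ ENNReal.ofReal C *
            (fracPerimeterIn n s (frontier Ω) E
              + ∫⁻ x in E, ENNReal.ofReal (Hα x ^ (s / α)) ∂μH[(n : ℝ)]) := by
  have hn : 0 < (n : ℝ) := hs.trans_lt hsn
  have hn' : n ≠ 0 := Nat.cast_ne_zero.1 hn.ne'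
  refine ⟨isoperimetricConst n α s, isoperimetricConst_pos n s hα, ?_⟩
  intro Ω hΩo hΩ Hα hHα E hE hEfin
  rcases eq_or_ne (μH[(n : ℝ)] E) 0 with hE0 | hE0
  · rw [hE0, ENNReal.zero_rpow_of_pos (div_pos (sub_pos.2 hsn) hn)]
    exact zero_le
  obtain ⟨R, hR, hER⟩ := exists_pos_ofReal_mul_pow_eq hn' (densityConst_pos n) hE0 hEfin.ne
  have hbound := ofReal_min_mul_rpow_neg_mul_hausdorffMeasure_le hn' hα hs hΩo hΩ hHα hE hR hER
  rw [hER] at hbound ⊢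
  rw [ofReal_densityConst_mul_pow_rpow_eq s hn' hα hR]
  gcongr

/-- Fractional Michael-Simon type isoperimetric inequality on convex hypersurfaces. -/
theorem fractional_michael_simon_isoperimetric_convex
    (n : ℕ) (hn : 1 ≤ n) (α s : ℝ)
    (hα : α ∈ Set.Ioo (0:ℝ) 1) (hs : s ∈ Set.Ioo (0:ℝ) 1) :
    ∃ C : ℝ, 0 < C ∧
      ∀ (Ω : Set (EuclideanSpace ℝ (Fin (n+1)))), IsOpen Ω → Convex ℝ Ω →
      ∀ (Hα : EuclideanSpace ℝ (Fin (n+1)) → ℝ), Measurable Hα →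
        (∀ x ∈ frontier Ω, 0 ≤ Hα x) →
        (∀ᵐ x ∂(μH[(n:ℝ)].restrict (frontier Ω)), IsFracMeanCurv n α Ω x (Hα x)) →
      ∀ (E : Set (EuclideanSpace ℝ (Fin (n+1)))), MeasurableSet E → E ⊆ frontier Ω →
        μH[(n:ℝ)] E < ⊤ →
        (μH[(n:ℝ)] E) ^ (((n:ℝ) - s) / (n:ℝ))
          ≤ ENNReal.ofReal C *
            (fracPerimeterIn n s (frontier Ω) E
              + ∫⁻ x in E, ENNReal.ofReal (Hα x ^ (s / α)) ∂μH[(n:ℝ)]) := by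
  obtain ⟨C, hC, hineq⟩ := fractional_michael_simon_isoperimetric_convex_general n hα.1 hs.1.le
    (hs.2.trans_le (Nat.one_le_cast.2 hn))
  exact ⟨C, hC, fun Ω hΩo hΩ Hα _ _ hHα E _ => hineq Ω hΩo hΩ Hα hHα E⟩
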